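/- For every t ∈ [0,T] and all Ê-integrable X, X′, one has |L_t(X) − L_t(X′)| ≤ (2c̄/c̲) Ê[|X − X′|] and |U_t(X) − U_t(X′)| ≤ (2c̄/c̲) Ê[|X − X′|]. -/

import Mathlib

open MeasureTheory Set Filter

/-- The sublinear expectation `Ê[X] = sup_{P ∈ Ps} ∫ X dP`. -/
noncomputable def sublinE {Ω : Type*} [MeasurableSpace Ω] (Ps : Set (Measure Ω)) (X : Ω → ℝ) : ℝ :=
  sSup ((fun P => ∫ ω, X ω ∂P) '' Ps)

/-- `X` is Ê-integrable: measurable, integrable w.r.t. each `P ∈ Ps`, and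
`sup_{P ∈ Ps} ∫ |X| dP < ∞`. -/
def EIntegrable {Ω : Type*} [MeasurableSpace Ω] (Ps : Set (Measure Ω)) (X : Ω → ℝ) : Prop :=
  Measurable X ∧ (∀ P ∈ Ps, Integrable X P) ∧ ∃ M : ℝ, ∀ P ∈ Ps, (∫ ω, |X ω| ∂P) ≤ M

/-- Assumption (H_r) on the barriers `l, u` and the running loss function `hb`,
with constants `0 < cl ≤ cu` and `Ch > 0`. -/
def HrAssumption {Ω : Type*} [MeasurableSpace Ω] (T cl cu Ch : ℝ)
    (l u : ℝ → ℝ) (hb : ℝ → Ω → ℝ → ℝ) : Prop :=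
  0 < cl ∧ cl ≤ cu ∧ 0 < Ch ∧
  ContinuousOn l (Icc 0 T) ∧ ContinuousOn u (Icc 0 T) ∧
  (∃ M : ℝ, ∀ t ∈ Icc (0:ℝ) T, |l t| ≤ M ∧ |u t| ≤ M) ∧
  (∃ ε > 0, ∀ t ∈ Icc (0:ℝ) T, ε ≤ u t - l t) ∧
  (∀ t y, Measurable fun ω => hb t ω y) ∧
  (∀ ε > 0, ∃ δ > 0, ∀ (ω : Ω) (t t' y y' : ℝ),
      |t - t'| + |y - y'| < δ → |hb t ω y - hb t' ω y'| < ε) ∧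
  (∀ t ω, StrictMono (hb t ω)) ∧
  (∀ t ω y, |hb t ω y| ≤ Ch * (1 + |y|)) ∧
  (∀ t ω y y', cl * |y - y'| ≤ |hb t ω y - hb t ω y'| ∧
    |hb t ω y - hb t ω y'| ≤ cu * |y - y'|)

/-- `H̄(t, x, X) = Ê[hb(t, x + X − Ê[X])]`. -/
noncomputable def Hbar {Ω : Type*} [MeasurableSpace Ω] (Ps : Set (Measure Ω))
    (hb : ℝ → Ω → ℝ → ℝ) (t x : ℝ) (X : Ω → ℝ) : ℝ :=
  sublinE Ps (fun ω => hb t ω (x + X ω - sublinE Ps X))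

/-- A family `(S_t)_{t ∈ [0,T]}` of Ê-integrable random variables which is continuous in mean. -/
def MeanContinuous {Ω : Type*} [MeasurableSpace Ω] (Ps : Set (Measure Ω)) (T : ℝ)
    (S : ℝ → Ω → ℝ) : Prop :=
  (∀ t ∈ Icc (0:ℝ) T, EIntegrable Ps (S t)) ∧
  ∀ t ∈ Icc (0:ℝ) T,
    Tendsto (fun s => sublinE Ps fun ω => |S s ω - S t ω|) (nhdsWithin t (Icc 0 T)) (nhds 0)

/-- The minimality (Skorokhod) condition in its equivalent increment form: `R` may only
increase on intervals where `φ` stays strictly below `u` and may only decrease on intervals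
where `φ` stays strictly above `l`. -/
def MinimalityIncr (T : ℝ) (φ l u R : ℝ → ℝ) : Prop :=
  ∀ s t : ℝ, 0 ≤ s → s < t → t ≤ T →
    ((∀ v, s < v → v ≤ t → φ v < u v) → R s ≤ R t) ∧
    ((∀ v, s < v → v ≤ t → l v < φ v) → R t ≤ R s)

/-- `(Y, R)` solves the backward Skorokhod problem with sublinear expectation for the data
`(Ybar, hb, l, u)`. -/
def IsBSPsol {Ω : Type*} [MeasurableSpace Ω] (Ps : Set (Measure Ω)) (T : ℝ)
    (hb : ℝ → Ω → ℝ → ℝ) (l u : ℝ → ℝ) (Ybar Y : ℝ → Ω → ℝ) (R : ℝ → ℝ) : Prop :=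
  (∀ t ∈ Icc (0:ℝ) T, ∀ ω, Y t ω = Ybar t ω + R T - R t) ∧
  (∀ t ∈ Icc (0:ℝ) T, l t ≤ sublinE Ps (fun ω => hb t ω (Y t ω)) ∧
    sublinE Ps (fun ω => hb t ω (Y t ω)) ≤ u t) ∧
  ContinuousOn R (Icc 0 T) ∧ BoundedVariationOn R (Icc 0 T) ∧ R 0 = 0 ∧
  MinimalityIncr T (fun v => sublinE Ps (fun ω => hb v ω (Y v ω))) l u R

/-!
The map `x ↦ H̄(t, x, X)` expands distances by at least the factor `c̲`, because adding a constant
commutes with `Ê`. The map `X ↦ H̄(t, x, X)` is `2c̄`-Lipschitz in mean: the loss contributes `c̄`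
and centring `X ↦ X − Ê[X]` contributes `2`. If `H̄(t, x, X) = H̄(t, x', X')`, then
`c̲ |x − x'| ≤ |H̄(t, x, X) − H̄(t, x', X)| = |H̄(t, x', X') − H̄(t, x', X)| ≤ 2c̄ Ê[|X − X'|]`.
-/

section SublinearExpectation

variable {Ω : Type*} [MeasurableSpace Ω] {Ps : Set (Measure Ω)} {X Y : Ω → ℝ}

theorem EIntegrable.integrable (hX : EIntegrable Ps X) {P : Measure Ω} (hP : P ∈ Ps) :
    Integrable X P :=
  hX.2.1 P hP

theorem EIntegrable.mono (hY : EIntegrable Ps Y) (hX : Measurable X)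
    (hXY : ∀ ω, |X ω| ≤ |Y ω|) : EIntegrable Ps X := by
  have hX_int : ∀ P ∈ Ps, Integrable X P := fun P hP =>
    (hY.integrable hP).mono hX.aestronglyMeasurable (.of_forall hXY)
  obtain ⟨M, hM⟩ := hY.2.2
  exact ⟨hX, hX_int, M, fun P hP =>
    (integral_mono (hX_int P hP).abs (hY.integrable hP).abs hXY).trans (hM P hP)⟩

theorem EIntegrable.const (hprob : ∀ P ∈ Ps, IsProbabilityMeasure P) (c : ℝ) :
    EIntegrable Ps fun _ : Ω => c := by
  refine ⟨measurable_const, fun P hP => ?_, |c|, fun P hP => ?_⟩ <;> have := hprob P hP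
  · exact integrable_const c
  · simp

theorem EIntegrable.abs (hX : EIntegrable Ps X) : EIntegrable Ps fun ω => |X ω| :=
  hX.mono hX.1.abs fun _ => (abs_abs _).le

theorem EIntegrable.add (hX : EIntegrable Ps X) (hY : EIntegrable Ps Y) :
    EIntegrable Ps fun ω => X ω + Y ω := by
  obtain ⟨M, hM⟩ := hX.2.2
  obtain ⟨N, hN⟩ := hY.2.2
  refine ⟨hX.1.add hY.1, fun P hP => (hX.integrable hP).add (hY.integrable hP), M + N,
    fun P hP => ?_⟩
  have iX := hX.integrable hP
  have iY := hY.integrable hP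
  calc ∫ ω, |X ω + Y ω| ∂P
      ≤ ∫ ω, |X ω| + |Y ω| ∂P :=
        integral_mono (iX.add iY).abs (iX.abs.add iY.abs) fun ω => abs_add_le (X ω) (Y ω)
    _ = (∫ ω, |X ω| ∂P) + ∫ ω, |Y ω| ∂P := integral_add iX.abs iY.abs
    _ ≤ M + N := add_le_add (hM P hP) (hN P hP)

theorem EIntegrable.const_mul (hX : EIntegrable Ps X) (c : ℝ) :
    EIntegrable Ps fun ω => c * X ω := by
  obtain ⟨M, hM⟩ := hX.2.2
  refine ⟨hX.1.const_mul c, fun P hP => (hX.integrable hP).const_mul c, |c| * M,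
    fun P hP => ?_⟩
  simp only [abs_mul, integral_const_mul]
  exact mul_le_mul_of_nonneg_left (hM P hP) (abs_nonneg c)

theorem EIntegrable.sub (hX : EIntegrable Ps X) (hY : EIntegrable Ps Y) :
    EIntegrable Ps fun ω => X ω - Y ω := by
  simpa only [neg_one_mul, ← sub_eq_add_neg] using hX.add (hY.const_mul (-1))

theorem EIntegrable.bddAbove (hX : EIntegrable Ps X) :
    BddAbove ((fun P => ∫ ω, X ω ∂P) '' Ps) := by
  obtain ⟨M, hM⟩ := hX.2.2
  refine ⟨M, forall_mem_image.2 fun P hP => ?_⟩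
  exact (le_abs_self _).trans (abs_integral_le_integral_abs.trans (hM P hP))

theorem EIntegrable.integral_le_sublinE (hX : EIntegrable Ps X) {P : Measure Ω} (hP : P ∈ Ps) :
    ∫ ω, X ω ∂P ≤ sublinE Ps X :=
  le_csSup hX.bddAbove (mem_image_of_mem _ hP)

theorem sublinE_le (hPs : Ps.Nonempty) {c : ℝ} (h : ∀ P ∈ Ps, ∫ ω, X ω ∂P ≤ c) :
    sublinE Ps X ≤ c :=
  csSup_le (hPs.image _) (forall_mem_image.2 h)

theorem sublinE_mono (hPs : Ps.Nonempty) (hX : EIntegrable Ps X) (hY : EIntegrable Ps Y)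
    (hXY : ∀ ω, X ω ≤ Y ω) : sublinE Ps X ≤ sublinE Ps Y :=
  sublinE_le hPs fun _ hP =>
    (integral_mono (hX.integrable hP) (hY.integrable hP) hXY).trans (hY.integral_le_sublinE hP)

theorem sublinE_add_le (hPs : Ps.Nonempty) (hX : EIntegrable Ps X) (hY : EIntegrable Ps Y) :
    sublinE Ps (fun ω => X ω + Y ω) ≤ sublinE Ps X + sublinE Ps Y :=
  sublinE_le hPs fun _ hP => (integral_add (hX.integrable hP) (hY.integrable hP)).trans_le
    (add_le_add (hX.integral_le_sublinE hP) (hY.integral_le_sublinE hP))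

theorem sublinE_add_const (hPs : Ps.Nonempty) (hprob : ∀ P ∈ Ps, IsProbabilityMeasure P)
    (hX : EIntegrable Ps X) (c : ℝ) :
    sublinE Ps (fun ω => X ω + c) = sublinE Ps X + c := by
  have integral_shift : ∀ P ∈ Ps, ∫ ω, X ω + c ∂P = (∫ ω, X ω ∂P) + c := fun P hP => by
    have := hprob P hP
    simp [integral_add (hX.integrable hP) (integrable_const c)]
  calc sublinE Ps (fun ω => X ω + c)
      = sSup (OrderIso.addRight c '' ((fun P => ∫ ω, X ω ∂P) '' Ps)) := by
        rw [image_image]; exact congrArg sSup (image_congr integral_shift)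
    _ = sublinE Ps X + c := ((OrderIso.addRight c).map_csSup' (hPs.image _) hX.bddAbove).symm

theorem sublinE_const_mul {c : ℝ} (hc : 0 ≤ c) (X : Ω → ℝ) :
    sublinE Ps (fun ω => c * X ω) = c * sublinE Ps X := by
  simp only [sublinE, integral_const_mul]
  rw [← smul_eq_mul c (sSup _), ← Real.sSup_smul_of_nonneg hc, ← image_smul, image_image]
  simp only [smul_eq_mul]

theorem abs_sublinE_sub_sublinE_le (hPs : Ps.Nonempty) (hX : EIntegrable Ps X)
    (hY : EIntegrable Ps Y) :
    |sublinE Ps X - sublinE Ps Y| ≤ sublinE Ps fun ω => |X ω - Y ω| := by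
  have sub_le {Z W : Ω → ℝ} (hZ : EIntegrable Ps Z) (hW : EIntegrable Ps W) :
      sublinE Ps Z - sublinE Ps W ≤ sublinE Ps fun ω => |Z ω - W ω| := by
    rw [sub_le_iff_le_add]
    calc sublinE Ps Z
        ≤ sublinE Ps (fun ω => |Z ω - W ω| + W ω) :=
          sublinE_mono hPs hZ ((hZ.sub hW).abs.add hW) fun ω =>
            sub_le_iff_le_add.1 (le_abs_self (Z ω - W ω))
      _ ≤ sublinE Ps (fun ω => |Z ω - W ω|) + sublinE Ps W :=
          sublinE_add_le hPs (hZ.sub hW).abs hW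
  refine abs_sub_le_iff.2 ⟨sub_le hX hY, ?_⟩
  simpa only [abs_sub_comm (Y _)] using sub_le hY hX

theorem sublinE_abs_centered_sub_le (hPs : Ps.Nonempty)
    (hprob : ∀ P ∈ Ps, IsProbabilityMeasure P) (hX : EIntegrable Ps X) (hY : EIntegrable Ps Y) :
    sublinE Ps (fun ω => |(X ω - sublinE Ps X) - (Y ω - sublinE Ps Y)|) ≤
      2 * sublinE Ps fun ω => |X ω - Y ω| := by
  have hXY := (hX.sub hY).abs
  have hcentered {Z : Ω → ℝ} (hZ : EIntegrable Ps Z) := hZ.sub (.const hprob (sublinE Ps Z))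
  calc sublinE Ps (fun ω => |(X ω - sublinE Ps X) - (Y ω - sublinE Ps Y)|)
      ≤ sublinE Ps (fun ω => |X ω - Y ω| + |sublinE Ps X - sublinE Ps Y|) :=
        sublinE_mono hPs ((hcentered hX).sub (hcentered hY)).abs (hXY.add (.const hprob _))
          fun ω => by rw [sub_sub_sub_comm]; exact abs_sub _ _
    _ = sublinE Ps (fun ω => |X ω - Y ω|) + |sublinE Ps X - sublinE Ps Y| :=
        sublinE_add_const hPs hprob hXY _
    _ ≤ 2 * sublinE Ps fun ω => |X ω - Y ω| := by
        linarith [abs_sublinE_sub_sublinE_le hPs hX hY]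

end SublinearExpectation

section LipschitzLoss

variable {Ω : Type*} [MeasurableSpace Ω] {Ps : Set (Measure Ω)} {X Y : Ω → ℝ}
  {h : Ω → ℝ → ℝ} {K : NNReal}

theorem EIntegrable.lipschitz_comp (hh : ∀ y, EIntegrable Ps fun ω => h ω y)
    (hlip : ∀ ω, LipschitzWith K (h ω)) (hX : EIntegrable Ps X) :
    EIntegrable Ps fun ω => h ω (X ω) := by
  have hmeas : Measurable fun ω => h ω (X ω) :=
    (measurable_uncurry_of_continuous_of_measurable (u := fun y ω => h ω y)
      (fun ω => (hlip ω).continuous) fun y => (hh y).1).comp (hX.1.prodMk measurable_id)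
  refine ((hh 0).abs.add (hX.abs.const_mul K)).mono hmeas fun ω => ?_
  have hdist : |h ω (X ω) - h ω 0| ≤ K * |X ω| := by
    simpa only [Real.dist_eq, sub_zero] using (hlip ω).dist_le_mul (X ω) 0
  calc |h ω (X ω)|
      ≤ |h ω 0| + |h ω (X ω) - h ω 0| := by
        simpa only [add_sub_cancel] using abs_add_le (h ω 0) (h ω (X ω) - h ω 0)
    _ ≤ |h ω 0| + K * |X ω| := by gcongr
    _ ≤ |(|h ω 0| + K * |X ω|)| := le_abs_self _

theorem abs_sublinE_lipschitz_comp_sub_le (hPs : Ps.Nonempty)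
    (hh : ∀ y, EIntegrable Ps fun ω => h ω y) (hlip : ∀ ω, LipschitzWith K (h ω))
    (hX : EIntegrable Ps X) (hY : EIntegrable Ps Y) :
    |sublinE Ps (fun ω => h ω (X ω)) - sublinE Ps (fun ω => h ω (Y ω))| ≤
      K * sublinE Ps fun ω => |X ω - Y ω| := by
  have hhX := hX.lipschitz_comp hh hlip
  have hhY := hY.lipschitz_comp hh hlip
  calc |sublinE Ps (fun ω => h ω (X ω)) - sublinE Ps (fun ω => h ω (Y ω))|
      ≤ sublinE Ps (fun ω => |h ω (X ω) - h ω (Y ω)|) := abs_sublinE_sub_sublinE_le hPs hhX hhY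
    _ ≤ sublinE Ps (fun ω => K * |X ω - Y ω|) :=
        sublinE_mono hPs (hhX.sub hhY).abs ((hX.sub hY).abs.const_mul K) fun ω =>
          (hlip ω).dist_le_mul (X ω) (Y ω)
    _ = K * sublinE Ps fun ω => |X ω - Y ω| := sublinE_const_mul K.coe_nonneg _

end LipschitzLoss

section Hbar

variable {Ω : Type*} [MeasurableSpace Ω] {Ps : Set (Measure Ω)} {hb : ℝ → Ω → ℝ → ℝ} {t : ℝ}
  {X X' : Ω → ℝ} {c : ℝ} {K : NNReal}

theorem EIntegrable.const_add_centered (hprob : ∀ P ∈ Ps, IsProbabilityMeasure P)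
    (hX : EIntegrable Ps X) (x : ℝ) : EIntegrable Ps fun ω => x + X ω - sublinE Ps X :=
  ((EIntegrable.const hprob x).add hX).sub (.const hprob _)

theorem abs_Hbar_sub_le (hPs : Ps.Nonempty) (hprob : ∀ P ∈ Ps, IsProbabilityMeasure P)
    (hint : ∀ y, EIntegrable Ps fun ω => hb t ω y) (hlip : ∀ ω, LipschitzWith K (hb t ω))
    (hX : EIntegrable Ps X) (hX' : EIntegrable Ps X') (x : ℝ) :
    |Hbar Ps hb t x X - Hbar Ps hb t x X'| ≤ 2 * K * sublinE Ps fun ω => |X ω - X' ω| := by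
  calc |Hbar Ps hb t x X - Hbar Ps hb t x X'|
      ≤ K * sublinE Ps (fun ω => |(x + X ω - sublinE Ps X) - (x + X' ω - sublinE Ps X')|) :=
        abs_sublinE_lipschitz_comp_sub_le hPs hint hlip
          (hX.const_add_centered hprob x) (hX'.const_add_centered hprob x)
    _ = K * sublinE Ps (fun ω => |(X ω - sublinE Ps X) - (X' ω - sublinE Ps X')|) := by
        congr! 4 with ω; ring
    _ ≤ K * (2 * sublinE Ps fun ω => |X ω - X' ω|) := by
        gcongr; exact sublinE_abs_centered_sub_le hPs hprob hX hX'
    _ = 2 * K * sublinE Ps fun ω => |X ω - X' ω| := by ring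

theorem monotone_Hbar_sub_mul (hPs : Ps.Nonempty) (hprob : ∀ P ∈ Ps, IsProbabilityMeasure P)
    (hint : ∀ y, EIntegrable Ps fun ω => hb t ω y) (hlip : ∀ ω, LipschitzWith K (hb t ω))
    (hmono : ∀ ω, Monotone fun y => hb t ω y - c * y) (hX : EIntegrable Ps X) :
    Monotone fun x => Hbar Ps hb t x X - c * x := by
  intro x x' hx
  have hloss (x : ℝ) := (hX.const_add_centered hprob x).lipschitz_comp hint hlip
  have hshift : Hbar Ps hb t x X + c * (x' - x) ≤ Hbar Ps hb t x' X := by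
    rw [Hbar, ← sublinE_add_const hPs hprob (hloss x)]
    refine sublinE_mono hPs ((hloss x).add (.const hprob _)) (hloss x') fun ω => ?_
    have := hmono ω (show x + X ω - sublinE Ps X ≤ x' + X ω - sublinE Ps X by gcongr)
    linarith
  linarith

theorem mul_abs_sub_le_abs_Hbar_sub (hPs : Ps.Nonempty)
    (hprob : ∀ P ∈ Ps, IsProbabilityMeasure P)
    (hint : ∀ y, EIntegrable Ps fun ω => hb t ω y) (hlip : ∀ ω, LipschitzWith K (hb t ω))
    (hmono : ∀ ω, Monotone fun y => hb t ω y - c * y) (hX : EIntegrable Ps X) (x x' : ℝ) :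
    c * |x - x'| ≤ |Hbar Ps hb t x X - Hbar Ps hb t x' X| := by
  wlog hx : x' ≤ x generalizing x x'
  · simpa only [abs_sub_comm] using this x' x (le_of_not_ge hx)
  have := monotone_Hbar_sub_mul hPs hprob hint hlip hmono hX hx
  rw [abs_of_nonneg (sub_nonneg.2 hx)]
  exact le_abs.2 (.inl (by linarith))

theorem stmt4_general (hPs : Ps.Nonempty) (hprob : ∀ P ∈ Ps, IsProbabilityMeasure P)
    (hint : ∀ y, EIntegrable Ps fun ω => hb t ω y) (hlip : ∀ ω, LipschitzWith K (hb t ω))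
    (hc : 0 < c) (hmono : ∀ ω, Monotone fun y => hb t ω y - c * y)
    (hX : EIntegrable Ps X) (hX' : EIntegrable Ps X') {x x' : ℝ}
    (hxx' : Hbar Ps hb t x X = Hbar Ps hb t x' X') :
    |x - x'| ≤ (2 * K / c) * sublinE Ps (fun ω => |X ω - X' ω|) := by
  rw [div_mul_eq_mul_div, le_div_iff₀' hc]
  calc c * |x - x'|
      ≤ |Hbar Ps hb t x X - Hbar Ps hb t x' X| :=
        mul_abs_sub_le_abs_Hbar_sub hPs hprob hint hlip hmono hX x x'
    _ = |Hbar Ps hb t x' X - Hbar Ps hb t x' X'| := by rw [hxx', abs_sub_comm]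
    _ ≤ 2 * K * sublinE Ps (fun ω => |X ω - X' ω|) := abs_Hbar_sub_le hPs hprob hint hlip hX hX' x'

end Hbar

namespace HrAssumption

variable {Ω : Type*} [MeasurableSpace Ω] {Ps : Set (Measure Ω)} {T cl cu Ch : ℝ} {l u : ℝ → ℝ}
  {hb : ℝ → Ω → ℝ → ℝ}

theorem eIntegrable (hHr : HrAssumption T cl cu Ch l u hb)
    (hprob : ∀ P ∈ Ps, IsProbabilityMeasure P) (t y : ℝ) :
    EIntegrable Ps fun ω => hb t ω y := by
  obtain ⟨-, -, -, -, -, -, -, hmeas, -, -, hgrowth, -⟩ := hHr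
  exact (EIntegrable.const hprob (Ch * (1 + |y|))).mono (hmeas t y) fun ω =>
    (hgrowth t ω y).trans (le_abs_self _)

theorem lipschitzWith (hHr : HrAssumption T cl cu Ch l u hb) (t : ℝ) (ω : Ω) :
    LipschitzWith cu.toNNReal (hb t ω) := by
  obtain ⟨-, -, -, -, -, -, -, -, -, -, -, hbilip⟩ := hHr
  exact .of_dist_le' fun y y' => (hbilip t ω y y').2

theorem monotone_sub_mul (hHr : HrAssumption T cl cu Ch l u hb) (t : ℝ) (ω : Ω) :
    Monotone fun y => hb t ω y - cl * y := by
  obtain ⟨-, -, -, -, -, -, -, -, -, hmono, -, hbilip⟩ := hHr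
  intro y y' hy
  have hexp := (hbilip t ω y' y).1
  rw [abs_of_nonneg (sub_nonneg.2 hy),
    abs_of_nonneg (sub_nonneg.2 ((hmono t ω).monotone hy))] at hexp
  linarith

end HrAssumption

/-- For `t ∈ [0,T]` and Ê-integrable `X, X'`,
`|L_t(X) − L_t(X')| ≤ (2c̄/c̲) Ê[|X − X'|]` and `|U_t(X) − U_t(X')| ≤ (2c̄/c̲) Ê[|X − X'|]`. -/
theorem stmt4 {Ω : Type*} [MeasurableSpace Ω] (T cl cu Ch : ℝ) (hT : 0 < T)
    (Ps : Set (Measure Ω)) (hPs : Ps.Nonempty) (hprob : ∀ P ∈ Ps, IsProbabilityMeasure P)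
    (l u : ℝ → ℝ) (hb : ℝ → Ω → ℝ → ℝ) (hHr : HrAssumption T cl cu Ch l u hb)
    (L U : ℝ → (Ω → ℝ) → ℝ)
    (hL : ∀ t ∈ Icc (0:ℝ) T, ∀ X : Ω → ℝ, EIntegrable Ps X → Hbar Ps hb t (L t X) X = l t)
    (hU : ∀ t ∈ Icc (0:ℝ) T, ∀ X : Ω → ℝ, EIntegrable Ps X → Hbar Ps hb t (U t X) X = u t)
    (t : ℝ) (ht : t ∈ Icc (0:ℝ) T)
    (X X' : Ω → ℝ) (hX : EIntegrable Ps X) (hX' : EIntegrable Ps X') :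
    |L t X - L t X'| ≤ (2 * cu / cl) * sublinE Ps (fun ω => |X ω - X' ω|) ∧
    |U t X - U t X'| ≤ (2 * cu / cl) * sublinE Ps (fun ω => |X ω - X' ω|) := by
  have root_bound {x x' : ℝ} (hxx' : Hbar Ps hb t x X = Hbar Ps hb t x' X') :
      |x - x'| ≤ (2 * cu / cl) * sublinE Ps (fun ω => |X ω - X' ω|) := by
    simpa only [Real.coe_toNNReal cu (hHr.1.le.trans hHr.2.1)] using
      stmt4_general hPs hprob (hHr.eIntegrable hprob t) (hHr.lipschitzWith t) hHr.1
        (hHr.monotone_sub_mul t) hX hX' hxx'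
  exact ⟨root_bound ((hL t ht X hX).trans (hL t ht X' hX').symm),
    root_bound ((hU t ht X hX).trans (hU t ht X' hX').symm)⟩
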